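/- Conforming lower bound (minorant): let ũ ∈ L²₋₁(Ω) have weak gradient ∇ũ ∈ L²(Ω;ℝ^N) with e := û − ũ ∈ H¹°₋₁(Ω). Then for every u ∈ H¹°₋₁(Ω), ‖∇e‖²_A ≥ M₋(∇ũ,u) := 2∫_Ω f u dx − ∫_Ω A∇(2ũ + u)·∇u dx. -/

import Mathlib

open MeasureTheory Filter Topology
open scoped RealInnerProductSpace

noncomputable section

/-- Euclidean space `ℝ^N`. -/
abbrev Euc (N : ℕ) := EuclideanSpace ℝ (Fin N)

/-- The Poincaré constant `c_N = 2/(N-2)`. -/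
def cN (N : ℕ) : ℝ := 2 / ((N : ℝ) - 2)

variable {N : ℕ}

/-- Squared weighted `L²_s(Ω)` norm: `∫_Ω (1+|x|²)^s u(x)² dx`. -/
def sqL2 (Ω : Set (Euc N)) (s : ℝ) (u : Euc N → ℝ) : ℝ :=
  ∫ x in Ω, (1 + ‖x‖ ^ 2) ^ s * u x ^ 2

/-- Weighted `L²_s(Ω)` norm. -/
def nrmL2 (Ω : Set (Euc N)) (s : ℝ) (u : Euc N → ℝ) : ℝ :=
  Real.sqrt (sqL2 Ω s u)

/-- Membership in the weighted space `L²_s(Ω)` (scalar functions). -/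
def MemL2 (Ω : Set (Euc N)) (s : ℝ) (u : Euc N → ℝ) : Prop :=
  AEStronglyMeasurable u (volume.restrict Ω) ∧
    Integrable (fun x => (1 + ‖x‖ ^ 2) ^ s * u x ^ 2) (volume.restrict Ω)

/-- Squared weighted `L²_s(Ω;ℝ^N)` norm for vector fields. -/
def sqL2V (Ω : Set (Euc N)) (s : ℝ) (v : Euc N → Euc N) : ℝ :=
  ∫ x in Ω, (1 + ‖x‖ ^ 2) ^ s * ‖v x‖ ^ 2

/-- Weighted `L²_s(Ω;ℝ^N)` norm for vector fields. -/
def nrmL2V (Ω : Set (Euc N)) (s : ℝ) (v : Euc N → Euc N) : ℝ :=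
  Real.sqrt (sqL2V Ω s v)

/-- Membership in the weighted space `L²_s(Ω;ℝ^N)` (vector fields). -/
def MemL2V (Ω : Set (Euc N)) (s : ℝ) (v : Euc N → Euc N) : Prop :=
  AEStronglyMeasurable v (volume.restrict Ω) ∧
    Integrable (fun x => (1 + ‖x‖ ^ 2) ^ s * ‖v x‖ ^ 2) (volume.restrict Ω)

/-- Test functions: `φ ∈ C_c^∞(Ω)`. -/
def IsTest (Ω : Set (Euc N)) (φ : Euc N → ℝ) : Prop :=
  ContDiff ℝ (⊤ : ℕ∞) φ ∧ HasCompactSupport φ ∧ tsupport φ ⊆ Ω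

/-- `g` is the weak gradient of `u` on `Ω`:
`∫_Ω u ∇φ = −∫_Ω φ g` for all test functions `φ`. -/
def IsWeakGrad (Ω : Set (Euc N)) (u : Euc N → ℝ) (g : Euc N → Euc N) : Prop :=
  ∀ φ : Euc N → ℝ, IsTest Ω φ →
    (∫ x in Ω, u x • gradient φ x) = - ∫ x in Ω, φ x • g x

/-- `d` is the weak divergence of the vector field `v` on `Ω`:
`∫_Ω v·∇φ = −∫_Ω d φ` for all test functions `φ`. -/
def IsWeakDiv (Ω : Set (Euc N)) (v : Euc N → Euc N) (d : Euc N → ℝ) : Prop :=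
  ∀ φ : Euc N → ℝ, IsTest Ω φ →
    (∫ x in Ω, ⟪v x, gradient φ x⟫) = - ∫ x in Ω, d x * φ x

/-- `u ∈ H¹°₋₁(Ω)` with weak gradient `g`: `u ∈ L²₋₁(Ω)`, `g ∈ L²(Ω;ℝ^N)` is the weak
gradient of `u`, and `u` is approximated by test functions in the natural norms. -/
def MemH10 (Ω : Set (Euc N)) (u : Euc N → ℝ) (g : Euc N → Euc N) : Prop :=
  MemL2 Ω (-1) u ∧ MemL2V Ω 0 g ∧ IsWeakGrad Ω u g ∧
    ∃ φ : ℕ → Euc N → ℝ, (∀ n, IsTest Ω (φ n)) ∧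
      Tendsto (fun n => nrmL2 Ω (-1) (fun x => u x - φ n x)) atTop (𝓝 0) ∧
      Tendsto (fun n => nrmL2V Ω 0 (fun x => g x - gradient (φ n) x)) atTop (𝓝 0)

/-- `g ∈ 𝒢`, the closure in `L²(Ω;ℝ^N)` of `{∇φ : φ ∈ C_c^∞(Ω)}`. -/
def MemG (Ω : Set (Euc N)) (g : Euc N → Euc N) : Prop :=
  MemL2V Ω 0 g ∧
    ∃ φ : ℕ → Euc N → ℝ, (∀ n, IsTest Ω (φ n)) ∧
      Tendsto (fun n => nrmL2V Ω 0 (fun x => g x - gradient (φ n) x)) atTop (𝓝 0)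

/-- `ψ ∈ D₀`, the set of weakly divergence-free fields in `L²(Ω;ℝ^N)`. -/
def MemD0 (Ω : Set (Euc N)) (ψ : Euc N → Euc N) : Prop :=
  MemL2V Ω 0 ψ ∧
    ∀ φ : Euc N → ℝ, IsTest Ω φ → (∫ x in Ω, ⟪ψ x, gradient φ x⟫) = 0

/-- The coefficient matrix field `A : Ω → ℝ^{N×N}`: measurable, essentially bounded,
symmetric, and uniformly coercive (`A(x)ξ·ξ ≥ α⁻²|ξ|²` for a.e. `x ∈ Ω`). -/
structure Coeff (N : ℕ) (Ω : Set (Euc N)) where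
  A : Euc N → Euc N →L[ℝ] Euc N
  α : ℝ
  α_pos : 0 < α
  meas : ∀ ξ : Euc N, AEStronglyMeasurable (fun x => A x ξ) (volume.restrict Ω)
  bdd : ∃ C : ℝ, ∀ᵐ x ∂(volume.restrict Ω), ∀ ξ : Euc N, ‖A x ξ‖ ≤ C * ‖ξ‖
  symm : ∀ x : Euc N, ∀ ξ η : Euc N, ⟪A x ξ, η⟫ = ⟪ξ, A x η⟫
  coer : ∀ᵐ x ∂(volume.restrict Ω), ∀ ξ : Euc N, α⁻¹ ^ 2 * ‖ξ‖ ^ 2 ≤ ⟪A x ξ, ξ⟫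

/-- The weighted inner product `⟨v,w⟩_A = ∫_Ω A v · w dx`. -/
def ipA (Ω : Set (Euc N)) (A : Euc N → Euc N →L[ℝ] Euc N) (v w : Euc N → Euc N) : ℝ :=
  ∫ x in Ω, ⟪A x (v x), w x⟫

/-- The squared `A`-weighted norm `‖v‖²_A = ∫_Ω A v · v dx`. -/
def sqA (Ω : Set (Euc N)) (A : Euc N → Euc N →L[ℝ] Euc N) (v : Euc N → Euc N) : ℝ :=
  ipA Ω A v v

/-- The `A`-weighted norm `‖v‖_A`. -/
def nrmA (Ω : Set (Euc N)) (A : Euc N → Euc N →L[ℝ] Euc N) (v : Euc N → Euc N) : ℝ :=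
  Real.sqrt (sqA Ω A v)

/-- `w = A⁻¹ v` (a.e. on `Ω`), with `w ∈ L²(Ω;ℝ^N)`. -/
def IsAInv (Ω : Set (Euc N)) (A : Euc N → Euc N →L[ℝ] Euc N) (v w : Euc N → Euc N) : Prop :=
  MemL2V Ω 0 w ∧ ∀ᵐ x ∂(volume.restrict Ω), A x (w x) = v x

/-!
Positivity of `A` at `∇e - ∇u`, where `e = û - ũ`, gives pointwise
`2 A∇û·∇u - A∇(2ũ + u)·∇u ≤ A∇e·∇e`: completing the square. It remains to integrate, and to
replace `∫ A∇û·∇u` by `∫ f u`. The latter is the weak formulation tested with `u`, which is allowed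
because both sides are continuous along the test functions approximating `u`: the left one since
`A∇û ∈ L²`, the right one since the weights of `f ∈ L²₊₁` and `u ∈ L²₋₁` cancel.
-/

section OperatorFields

variable {X 𝕜 E F : Type*} [MeasurableSpace X] {μ : Measure X} [NontriviallyNormedField 𝕜]
  [CompleteSpace 𝕜] [NormedAddCommGroup E] [NormedSpace 𝕜 E] [FiniteDimensional 𝕜 E]
  [NormedAddCommGroup F] [NormedSpace 𝕜 F] {A : X → E →L[𝕜] F} {v : X → E}

theorem aestronglyMeasurable_clm_apply
    (hA : ∀ ξ, AEStronglyMeasurable (fun x => A x ξ) μ) (hv : AEStronglyMeasurable v μ) :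
    AEStronglyMeasurable (fun x => A x (v x)) μ := by
  let b := Module.finBasis 𝕜 E
  have expand : (fun x => A x (v x)) = fun x => ∑ i, b.coord i (v x) • A x (b i) := by
    ext x
    conv_lhs => rw [← b.sum_repr (v x)]
    simp only [map_sum, map_smul, Module.Basis.coord_apply]
  rw [expand]
  refine Finset.aestronglyMeasurable_fun_sum _ fun i _ => ?_
  exact ((b.coord i).continuous_of_finiteDimensional.comp_aestronglyMeasurable hv).smul (hA _)

theorem memLp_clm_apply {p : ENNReal}
    (hA : ∀ ξ, AEStronglyMeasurable (fun x => A x ξ) μ)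
    (hbdd : ∃ C : ℝ, ∀ᵐ x ∂μ, ∀ ξ, ‖A x ξ‖ ≤ C * ‖ξ‖) (hv : MemLp v p μ) :
    MemLp (fun x => A x (v x)) p μ := by
  obtain ⟨C, hC⟩ := hbdd
  exact hv.of_le_mul (aestronglyMeasurable_clm_apply hA hv.1) (hC.mono fun x hx => hx _)

end OperatorFields

section L2Pairing

variable {X E : Type*} [MeasurableSpace X] {μ : Measure X}
  [NormedAddCommGroup E] [InnerProductSpace ℝ E] {v w : X → E}

theorem integrable_inner_of_memLp_two (hv : MemLp v 2 μ) (hw : MemLp w 2 μ) :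
    Integrable (fun x => ⟪v x, w x⟫) μ :=
  (hv.norm.integrable_mul hw.norm).mono' (hv.1.inner hw.1)
    (ae_of_all _ fun x => norm_inner_le_norm (v x) (w x))

theorem norm_toLp_two (hv : MemLp v 2 μ) : ‖hv.toLp v‖ = √(∫ x, ‖v x‖ ^ 2 ∂μ) := by
  rw [@norm_eq_sqrt_real_inner (Lp E 2 μ), L2.inner_def]
  congr 1
  refine integral_congr_ae (hv.coeFn_toLp.mono fun x hx => ?_)
  simp only [hx, real_inner_self_eq_norm_sq]

theorem abs_integral_inner_le (hv : MemLp v 2 μ) (hw : MemLp w 2 μ) :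
    |∫ x, ⟪v x, w x⟫ ∂μ| ≤ √(∫ x, ‖v x‖ ^ 2 ∂μ) * √(∫ x, ‖w x‖ ^ 2 ∂μ) := by
  have inner_toLp : ⟪hv.toLp v, hw.toLp w⟫ = ∫ x, ⟪v x, w x⟫ ∂μ := by
    refine integral_congr_ae ?_
    filter_upwards [hv.coeFn_toLp, hw.coeFn_toLp] with x hvx hwx
    rw [hvx, hwx]
  rw [← inner_toLp, ← norm_toLp_two hv, ← norm_toLp_two hw]
  exact abs_real_inner_le_norm _ _

theorem tendsto_integral_inner {ι : Type*} {l : Filter ι} {φ : ι → X → E}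
    (hv : MemLp v 2 μ) (hw : MemLp w 2 μ) (hφ : ∀ n, MemLp (φ n) 2 μ)
    (hlim : Tendsto (fun n => √(∫ x, ‖w x - φ n x‖ ^ 2 ∂μ)) l (𝓝 0)) :
    Tendsto (fun n => ∫ x, ⟪v x, φ n x⟫ ∂μ) l (𝓝 (∫ x, ⟪v x, w x⟫ ∂μ)) := by
  refine tendsto_iff_norm_sub_tendsto_zero.2 (squeeze_zero (fun _ => norm_nonneg _) (fun n => ?_)
    (by simpa only [mul_zero] using hlim.const_mul √(∫ x, ‖v x‖ ^ 2 ∂μ)))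
  rw [norm_sub_rev, ← integral_sub (integrable_inner_of_memLp_two hv hw)
    (integrable_inner_of_memLp_two hv (hφ n))]
  simp only [← inner_sub_right]
  exact abs_integral_inner_le hv (hw.sub (hφ n))

end L2Pairing

section Minorant

variable {E : Type*} [NormedAddCommGroup E] [InnerProductSpace ℝ E]

theorem inner_minorant_le {T : E →L[ℝ] E} (hT : T.IsPositive) (p q g : E) :
    2 * ⟪T p, g⟫ - ⟪T ((2 : ℝ) • q + g), g⟫ ≤ ⟪T (p - q), p - q⟫ := by
  have nonneg : 0 ≤ ⟪T (p - q - g), p - q - g⟫ := hT.inner_nonneg_left _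
  have symm : ⟪T g, p - q⟫ = ⟪T (p - q), g⟫ := by
    rw [real_inner_comm]
    exact (hT.isSymmetric (p - q) g).symm
  have expand : ⟪T (p - q - g), p - q - g⟫ =
      ⟪T (p - q), p - q⟫ - ⟪T (p - q), g⟫ - ⟪T g, p - q⟫ + ⟪T g, g⟫ := by
    rw [map_sub T (p - q) g, inner_sub_left, inner_sub_right _ (p - q) g,
      inner_sub_right _ (p - q) g]
    ring
  have cross : ⟪T (p - q), g⟫ = ⟪T p, g⟫ - ⟪T q, g⟫ := by rw [map_sub, inner_sub_left]
  have shifted : ⟪T ((2 : ℝ) • q + g), g⟫ = 2 * ⟪T q, g⟫ + ⟪T g, g⟫ := by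
    rw [map_add, map_smul, inner_add_left, real_inner_smul_left]
  linarith

theorem integral_minorant_le [FiniteDimensional ℝ E] {X : Type*} [MeasurableSpace X]
    {μ : Measure X} {A : X → E →L[ℝ] E} {p q g : X → E}
    (hA : ∀ ξ, AEStronglyMeasurable (fun x => A x ξ) μ)
    (hbdd : ∃ C : ℝ, ∀ᵐ x ∂μ, ∀ ξ, ‖A x ξ‖ ≤ C * ‖ξ‖) (hpos : ∀ᵐ x ∂μ, (A x).IsPositive)
    (hp : MemLp p 2 μ) (hq : MemLp q 2 μ) (hg : MemLp g 2 μ) :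
    2 * (∫ x, ⟪A x (p x), g x⟫ ∂μ) - (∫ x, ⟪A x ((2 : ℝ) • q x + g x), g x⟫ ∂μ) ≤
      ∫ x, ⟪A x (p x - q x), p x - q x⟫ ∂μ := by
  have integrable {v w : X → E} (hv : MemLp v 2 μ) (hw : MemLp w 2 μ) :
      Integrable (fun x => ⟪A x (v x), w x⟫) μ :=
    integrable_inner_of_memLp_two (memLp_clm_apply hA hbdd hv) hw
  have int_pg := (integrable hp hg).const_mul 2
  have int_qg : Integrable (fun x => ⟪A x ((2 : ℝ) • q x + g x), g x⟫) μ :=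
    integrable ((hq.const_smul (2 : ℝ)).add hg) hg
  rw [← integral_const_mul, ← integral_sub int_pg int_qg]
  exact integral_mono_ae (int_pg.sub int_qg) (integrable (hp.sub hq) (hp.sub hq))
    (hpos.mono fun x hx => inner_minorant_le hx _ _ _)

end Minorant

section Weights

variable {V E : Type*} [NormedAddCommGroup V] [NormedAddCommGroup E]

/-- The rescaled field `x ↦ (1 + |x|²)^(s/2) v(x)`: `v` lies in the weighted space `L²_s` exactly
when `weighted s v` lies in `L²`. Scalar functions are the case `E = ℝ`. -/
def weighted [NormedSpace ℝ E] (s : ℝ) (v : V → E) (x : V) : E :=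
  (1 + ‖x‖ ^ 2) ^ (s / 2) • v x

theorem one_add_norm_sq_pos (x : V) : 0 < 1 + ‖x‖ ^ 2 := by positivity

theorem continuous_one_add_norm_sq_rpow (s : ℝ) :
    Continuous fun x : V => (1 + ‖x‖ ^ 2) ^ s :=
  Continuous.rpow_const (by fun_prop) fun x => Or.inl (one_add_norm_sq_pos x).ne'

section NormedSpace

variable [NormedSpace ℝ E]

@[simp]
theorem weighted_zero (v : V → E) : weighted 0 v = v := by
  ext x
  simp [weighted]

theorem weighted_sub (s : ℝ) (v w : V → E) (x : V) :
    weighted s v x - weighted s w x = weighted s (fun y => v y - w y) x :=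
  (smul_sub _ _ _).symm

theorem norm_weighted_sq (s : ℝ) (v : V → E) (x : V) :
    ‖weighted s v x‖ ^ 2 = (1 + ‖x‖ ^ 2) ^ s * ‖v x‖ ^ 2 := by
  have weight_sq : ((1 + ‖x‖ ^ 2) ^ (s / 2)) ^ 2 = (1 + ‖x‖ ^ 2) ^ s := by
    rw [← Real.rpow_mul_natCast (one_add_norm_sq_pos x).le, Nat.cast_ofNat,
      div_mul_cancel₀ s two_ne_zero]
  rw [weighted, norm_smul, mul_pow, Real.norm_eq_abs, sq_abs, weight_sq]

variable [MeasurableSpace V] [OpensMeasurableSpace V] {μ : Measure V} {v : V → E}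

theorem memLp_weighted_iff {s : ℝ} (hv : AEStronglyMeasurable v μ) :
    MemLp (weighted s v) 2 μ ↔ Integrable (fun x => (1 + ‖x‖ ^ 2) ^ s * ‖v x‖ ^ 2) μ := by
  have hw : AEStronglyMeasurable (weighted s v) μ :=
    (continuous_one_add_norm_sq_rpow _).aestronglyMeasurable.smul hv
  simp only [memLp_two_iff_integrable_sq_norm hw, norm_weighted_sq]

theorem memLp_weighted_of_hasCompactSupport [IsFiniteMeasureOnCompacts μ] (s : ℝ) {p : ENNReal}
    (hv : Continuous v) (hsupp : HasCompactSupport v) : MemLp (weighted s v) p μ :=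
  ((continuous_one_add_norm_sq_rpow _).smul hv).memLp_of_hasCompactSupport hsupp.smul_left

end NormedSpace

variable [InnerProductSpace ℝ E]

theorem inner_weighted {s t : ℝ} (hst : s + t = 0) (v w : V → E) (x : V) :
    ⟪weighted s v x, weighted t w x⟫ = ⟪v x, w x⟫ := by
  have weights_cancel : (1 + ‖x‖ ^ 2) ^ (s / 2) * (1 + ‖x‖ ^ 2) ^ (t / 2) = 1 := by
    rw [← Real.rpow_add (one_add_norm_sq_pos x), ← add_div, hst, zero_div, Real.rpow_zero]
  rw [weighted, weighted, real_inner_smul_left, real_inner_smul_right, ← mul_assoc,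
    weights_cancel, one_mul]

theorem tendsto_integral_inner_of_weighted [MeasurableSpace V] {μ : Measure V} {s t : ℝ}
    (hst : s + t = 0) {v w : V → E} {ι : Type*} {l : Filter ι} {φ : ι → V → E}
    (hv : MemLp (weighted s v) 2 μ) (hw : MemLp (weighted t w) 2 μ)
    (hφ : ∀ n, MemLp (weighted t (φ n)) 2 μ)
    (hlim : Tendsto (fun n => √(∫ x, (1 + ‖x‖ ^ 2) ^ t * ‖w x - φ n x‖ ^ 2 ∂μ)) l (𝓝 0)) :
    Tendsto (fun n => ∫ x, ⟪v x, φ n x⟫ ∂μ) l (𝓝 (∫ x, ⟪v x, w x⟫ ∂μ)) := by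
  simpa only [inner_weighted hst] using tendsto_integral_inner hv hw hφ
    (by simpa only [weighted_sub, norm_weighted_sq] using hlim)

end Weights

section Gradient

variable {F : Type*} [NormedAddCommGroup F] [InnerProductSpace ℝ F] [CompleteSpace F] {φ : F → ℝ}

theorem continuous_gradient (hφ : ContDiff ℝ 1 φ) : Continuous (gradient φ) :=
  (InnerProductSpace.toDual ℝ F).symm.continuous.comp (hφ.continuous_fderiv one_ne_zero)

theorem hasCompactSupport_gradient (hφ : HasCompactSupport φ) : HasCompactSupport (gradient φ) :=
  (hφ.fderiv (𝕜 := ℝ)).comp_left (map_zero (InnerProductSpace.toDual ℝ F).symm)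

end Gradient

variable {Ω : Set (Euc N)} {s : ℝ} {f u φ : Euc N → ℝ} {g σ : Euc N → Euc N}

theorem MemL2.memLp_weighted (hu : MemL2 Ω s u) :
    MemLp (weighted s u) 2 (volume.restrict Ω) :=
  (memLp_weighted_iff hu.1).2 (by simpa only [Real.norm_eq_abs, sq_abs] using hu.2)

theorem MemL2V.memLp_weighted (hg : MemL2V Ω s g) :
    MemLp (weighted s g) 2 (volume.restrict Ω) :=
  (memLp_weighted_iff hg.1).2 hg.2

theorem MemL2V.memLp (hg : MemL2V Ω 0 g) : MemLp g 2 (volume.restrict Ω) := by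
  simpa only [weighted_zero] using hg.memLp_weighted

theorem IsTest.memLp_weighted (hφ : IsTest Ω φ) (s : ℝ) :
    MemLp (weighted s φ) 2 (volume.restrict Ω) :=
  memLp_weighted_of_hasCompactSupport s hφ.1.continuous hφ.2.1

theorem IsTest.memLp_weighted_gradient (hφ : IsTest Ω φ) (s : ℝ) :
    MemLp (weighted s (gradient φ)) 2 (volume.restrict Ω) :=
  memLp_weighted_of_hasCompactSupport s (continuous_gradient (hφ.1.of_le (by simp)))
    (hasCompactSupport_gradient hφ.2.1)

theorem MemH10.integral_inner_eq_integral_mul (hu : MemH10 Ω u g) (hf : MemL2 Ω 1 f)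
    (hσ : MemLp σ 2 (volume.restrict Ω))
    (hweak : ∀ φ, IsTest Ω φ → (∫ x in Ω, ⟪σ x, gradient φ x⟫) = ∫ x in Ω, f x * φ x) :
    (∫ x in Ω, ⟪σ x, g x⟫) = ∫ x in Ω, f x * u x := by
  obtain ⟨hu, hg, -, φ, hφ, hlim, hlim_grad⟩ := hu
  have tendsto_flux : Tendsto (fun n => ∫ x in Ω, ⟪σ x, gradient (φ n) x⟫) atTop
      (𝓝 (∫ x in Ω, ⟪σ x, g x⟫)) :=
    tendsto_integral_inner_of_weighted (add_zero 0) ((weighted_zero σ).symm ▸ hσ) hg.memLp_weighted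
      (fun n => (hφ n).memLp_weighted_gradient 0) hlim_grad
  have tendsto_source : Tendsto (fun n => ∫ x in Ω, f x * φ n x) atTop
      (𝓝 (∫ x in Ω, f x * u x)) := by
    simpa only [RCLike.inner_apply, conj_trivial, mul_comm (f _)] using
      tendsto_integral_inner_of_weighted (add_neg_cancel 1) hf.memLp_weighted hu.memLp_weighted
        (fun n => (hφ n).memLp_weighted (-1))
        (by simpa only [nrmL2, sqL2, Real.norm_eq_abs, sq_abs] using hlim)
  refine tendsto_nhds_unique tendsto_flux (tendsto_source.congr fun n => ?_)
  exact (hweak _ (hφ n)).symm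

theorem Coeff.isPositive (M : Coeff N Ω) : ∀ᵐ x ∂volume.restrict Ω, (M.A x).IsPositive :=
  M.coer.mono fun x hx => ⟨M.symm x, fun ξ => le_trans (by positivity) (hx ξ)⟩

theorem stmt_6_general {A : Euc N → Euc N →L[ℝ] Euc N}
    (hA : ∀ ξ, AEStronglyMeasurable (fun x => A x ξ) (volume.restrict Ω))
    (hbdd : ∃ C : ℝ, ∀ᵐ x ∂volume.restrict Ω, ∀ ξ, ‖A x ξ‖ ≤ C * ‖ξ‖)
    (hpos : ∀ᵐ x ∂volume.restrict Ω, (A x).IsPositive)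
    (hf : MemL2 Ω 1 f) {p q : Euc N → Euc N} (hp : MemL2V Ω 0 p) (hq : MemL2V Ω 0 q)
    (hweak : ∀ φ, IsTest Ω φ → (∫ x in Ω, ⟪A x (p x), gradient φ x⟫) = ∫ x in Ω, f x * φ x)
    (hu : MemH10 Ω u g) :
    2 * (∫ x in Ω, f x * u x) - (∫ x in Ω, ⟪A x ((2 : ℝ) • q x + g x), g x⟫) ≤
      sqA Ω A (fun x => p x - q x) := by
  have hflux := memLp_clm_apply hA hbdd hp.memLp
  rw [← hu.integral_inner_eq_integral_mul hf hflux hweak]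
  exact integral_minorant_le hA hbdd hpos hp.memLp hq.memLp hu.2.1.memLp

/-- Conforming lower bound (minorant):
`‖∇e‖²_A ≥ 2∫ f u − ∫ A∇(2ũ + u)·∇u` for all `u ∈ H¹°₋₁(Ω)`. -/
theorem stmt_6 (Ω : Set (Euc N)) (hΩ : IsOpen Ω) (hN : 3 ≤ N) (M : Coeff N Ω)
    (f : Euc N → ℝ) (hf : MemL2 Ω 1 f)
    (uh : Euc N → ℝ) (gu : Euc N → Euc N)
    (huh : MemL2 Ω (-1) uh) (hgu : MemL2V Ω 0 gu) (hguw : IsWeakGrad Ω uh gu)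
    (hweak : ∀ φ : Euc N → ℝ, IsTest Ω φ →
      (∫ x in Ω, ⟪M.A x (gu x), gradient φ x⟫) = ∫ x in Ω, f x * φ x)
    (ut : Euc N → ℝ) (gt : Euc N → Euc N)
    (hut : MemL2 Ω (-1) ut) (hgt : MemL2V Ω 0 gt) (hgtw : IsWeakGrad Ω ut gt)
    (he : MemH10 Ω (fun x => uh x - ut x) (fun x => gu x - gt x)) :
    ∀ (u : Euc N → ℝ) (g : Euc N → Euc N), MemH10 Ω u g →
      2 * (∫ x in Ω, f x * u x) -
          (∫ x in Ω, ⟪M.A x ((2 : ℝ) • gt x + g x), g x⟫) ≤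
        sqA Ω M.A (fun x => gu x - gt x) := by
  intro u g hu
  exact stmt_6_general M.meas M.bdd M.isPositive hf hgu hgt hweak hu
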